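/- arXiv:1711.07337 — 2 statements merged into one kernel-verified Lean document; each statement's English description precedes it below -/
import Mathlib

section
/- For a real parameter a > 0 and real h, ω with |h| < 1, |ω| ≤ 1 and parameter b > 1, the expansion (h² - 2hω + 1)^{-a} = Σ_{l=0}^{∞} ((a)_l/(b-1)_l) h^l C^{b-1}_l(ω) · ₂F₁(a+l, a-b+1; b+l; h²) holds, with the series converging absolutely. -/
open Finset

/-- Pochhammer (rising factorial) `(a)_k`. -/
noncomputable def poch (a : ℝ) (k : ℕ) : ℝ := ∏ i ∈ Finset.range k, (a + i)

/-- Gegenbauer polynomial `C^λ_n(z)`. -/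
noncomputable def gegenbauer (ρ : ℝ) (n : ℕ) (z : ℝ) : ℝ :=
  ∑ k ∈ Finset.range (n / 2 + 1),
    (-1 : ℝ) ^ k * Real.Gamma (ρ + n - k) /
      (Real.Gamma ρ * k.factorial * (n - 2 * k).factorial) * (2 * z) ^ (n - 2 * k)

/-- Gauss hypergeometric series `₂F₁(a, b; c; x)`. -/
noncomputable def F21 (a b c x : ℝ) : ℝ :=
  ∑' k : ℕ, poch a k * poch b k / (poch c k * k.factorial) * x ^ k

/-!
The Gegenbauer recurrence `(n + 2) s (n + 2) = 2 (n + 1 + a) ω s (n + 1) - (n + 2 a) s n` and its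
two initial values determine `s`. Writing `ω = Re z` with `|z| = 1`, the Cauchy product of
`(1 - z h)^{-a}` and `(1 - z̄ h)^{-a}` has coefficients satisfying it with parameter `a`, since the
product `F` solves `(1 - 2 ω h + h²) F' = 2 a (ω - h) F`; hence every solution `s` has generating
function `∑ s n hⁿ = (h² - 2 h ω + 1)^{-a}`. The connection sums
`∑_{l + 2 k = n} (c + l) w(l, k) C^c_l(ω)`, with `c = b - 1`, satisfy the recurrence with parameter
`a` as well. Expanding their generating function as a double series over `(l, k)` and summing over
`k` first turns the inner sums into the hypergeometric factors.
-/

open Filter Topology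
open scoped PowerSeries Nat ComplexConjugate

/-- The three-term recurrence of the Gegenbauer polynomials with parameter `a` at the point `ω`,
together with its initial values, as a property of a sequence so that different formulas for
`C^a_n(ω)` can be identified through it. -/
structure IsGegenbauerSeq {R : Type*} [CommRing R] (a ω : R) (s : ℕ → R) : Prop where
  zero : s 0 = 1
  one : s 1 = 2 * a * ω
  add_two : ∀ n : ℕ, (n + 2) * s (n + 2) = 2 * (n + 1 + a) * ω * s (n + 1) - (n + 2 * a) * s n

namespace IsGegenbauerSeq

variable {R S : Type*} [CommRing R] [CommRing S] {a ω : R} {s t : ℕ → R}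

theorem map (f : R →+* S) (hs : IsGegenbauerSeq a ω s) :
    IsGegenbauerSeq (f a) (f ω) (fun n => f (s n)) where
  zero := by simp [hs.zero]
  one := by simp [hs.one, map_ofNat]
  add_two n := by simpa [map_ofNat] using congrArg f (hs.add_two n)

theorem unique [IsDomain R] [CharZero R] (hs : IsGegenbauerSeq a ω s)
    (ht : IsGegenbauerSeq a ω t) : s = t := by
  have succ_pair : ∀ n, s n = t n ∧ s (n + 1) = t (n + 1) := by
    intro n
    induction n with
    | zero => exact ⟨hs.zero.trans ht.zero.symm, hs.one.trans ht.one.symm⟩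
    | succ n ih =>
      refine ⟨ih.2, mul_left_cancel₀ (by exact_mod_cast (n + 1).succ_ne_zero : (n + 2 : R) ≠ 0) ?_⟩
      rw [hs.add_two, ht.add_two, ih.1, ih.2]
  exact funext fun n => (succ_pair n).1

end IsGegenbauerSeq

/-- The pairs `(l, k)` with `l + 2 * k = n`, the index set of the sums over which Gegenbauer
polynomials and their connection formulas run. -/
def antidiagonalTwo (n : ℕ) : Finset (ℕ × ℕ) :=
  (range (n / 2 + 1)).image fun k => (n - 2 * k, k)

theorem mem_antidiagonalTwo {n : ℕ} {p : ℕ × ℕ} : p ∈ antidiagonalTwo n ↔ p.1 + 2 * p.2 = n := by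
  simp only [antidiagonalTwo, mem_image, mem_range, Prod.ext_iff]
  constructor
  · rintro ⟨k, _, _, _⟩
    omega
  · exact fun h => ⟨p.2, by omega, by omega, rfl⟩

section AddCommMonoid

variable {M : Type*} [AddCommMonoid M]

theorem sum_antidiagonalTwo (f : ℕ × ℕ → M) (n : ℕ) :
    ∑ p ∈ antidiagonalTwo n, f p = ∑ k ∈ range (n / 2 + 1), f (n - 2 * k, k) :=
  sum_image fun _ _ _ _ h => congrArg Prod.snd h

theorem sum_antidiagonalTwo_succ {f : ℕ × ℕ → M} (hf : ∀ k, f (0, k) = 0) (n : ℕ) :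
    ∑ p ∈ antidiagonalTwo (n + 1), f p = ∑ p ∈ antidiagonalTwo n, f (p.1 + 1, p.2) := by
  symm
  refine sum_of_injOn (fun p => (p.1 + 1, p.2)) (fun p _ q _ => by simp [Prod.ext_iff])
    (fun p => ?_) ?_ fun _ _ => rfl
  · simp only [mem_coe, mem_antidiagonalTwo]
    omega
  · rintro ⟨_ | l, k⟩ hp hp'
    · exact hf k
    · refine absurd ⟨(l, k), ?_, rfl⟩ hp'
      simp only [mem_coe, mem_antidiagonalTwo] at hp ⊢
      omega

theorem sum_antidiagonalTwo_add_two {f : ℕ × ℕ → M} (hf : ∀ l, f (l, 0) = 0) (n : ℕ) :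
    ∑ p ∈ antidiagonalTwo (n + 2), f p = ∑ p ∈ antidiagonalTwo n, f (p.1, p.2 + 1) := by
  symm
  refine sum_of_injOn (fun p => (p.1, p.2 + 1)) (fun p _ q _ => by simp [Prod.ext_iff])
    (fun p => ?_) ?_ fun _ _ => rfl
  · simp only [mem_coe, mem_antidiagonalTwo]
    omega
  · rintro ⟨l, _ | k⟩ hp hp'
    · exact hf l
    · refine absurd ⟨(l, k), ?_, rfl⟩ hp'
      simp only [mem_coe, mem_antidiagonalTwo] at hp ⊢
      omega

theorem sum_antidiagonalTwo_eq_add {F G H : ℕ × ℕ → M} {n : ℕ}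
    (hG : F (n + 2, 0) = G (n + 1, 0)) (hH : ∀ k, n = 2 * k → F (0, k + 1) = H (0, k))
    (hGH : ∀ l k, n = l + 1 + 2 * k → F (l + 1, k + 1) = G (l, k + 1) + H (l + 1, k)) :
    ∑ p ∈ antidiagonalTwo (n + 2), F p =
      ∑ p ∈ antidiagonalTwo (n + 1), G p + ∑ p ∈ antidiagonalTwo n, H p := by
  let G' : ℕ × ℕ → M := fun p => if p.1 = 0 then 0 else G (p.1 - 1, p.2)
  let H' : ℕ × ℕ → M := fun p => if p.2 = 0 then 0 else H (p.1, p.2 - 1)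
  have split : ∀ p ∈ antidiagonalTwo (n + 2), F p = G' p + H' p := by
    rintro ⟨_ | l, _ | k⟩ hp <;> simp only [mem_antidiagonalTwo] at hp
    · omega
    · simpa [G', H'] using hH k (by omega)
    · obtain rfl : l = n + 1 := by omega
      simpa [G', H'] using hG
    · simpa [G', H'] using hGH l k (by omega)
  rw [sum_congr rfl split, sum_add_distrib, sum_antidiagonalTwo_succ (by simp [G']),
    sum_antidiagonalTwo_add_two (by simp [H'])]
  simp [G', H']

theorem hasSum_sum_antidiagonalTwo [TopologicalSpace M] [ContinuousAdd M] [RegularSpace M]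
    {f : ℕ × ℕ → M} {m : M} (hf : HasSum f m) :
    HasSum (fun n => ∑ p ∈ antidiagonalTwo n, f p) m :=
  ((Equiv.sigmaFiberEquiv fun p : ℕ × ℕ => p.1 + 2 * p.2).hasSum_iff.mpr hf).sigma fun n =>
    (Equiv.subtypeEquivRight fun _ => mem_antidiagonalTwo).hasSum_iff.mp
      ((antidiagonalTwo n).hasSum f)

end AddCommMonoid

section Pochhammer

variable (a : ℝ)

theorem poch_zero : poch a 0 = 1 := by simp [poch]

theorem poch_succ (k : ℕ) : poch a (k + 1) = poch a k * (a + k) := by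
  simp [poch, prod_range_succ]

theorem poch_add (l k : ℕ) : poch a (l + k) = poch a l * poch (a + l) k := by
  simp [poch, prod_range_add, add_assoc]

variable {a}

theorem poch_ne_zero (ha : ∀ n : ℕ, a + n ≠ 0) (k : ℕ) : poch a k ≠ 0 :=
  prod_ne_zero_iff.mpr fun i _ => ha i

theorem Gamma_add_natCast_eq_poch (ha : ∀ n : ℕ, a + n ≠ 0) (k : ℕ) :
    Real.Gamma (a + k) = Real.Gamma a * poch a k := by
  induction k with
  | zero => simp [poch_zero]
  | succ k ih =>
    rw [poch_succ, Nat.cast_succ, ← add_assoc, Real.Gamma_add_one (ha k), ih]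
    ring

end Pochhammer

section Gegenbauer

/-- The term of the explicit sum for `C^ρ_n(z)` indexed by `(m, k)` with `m + 2 * k = n`. -/
noncomputable def gegenbauerTerm (ρ z : ℝ) (p : ℕ × ℕ) : ℝ :=
  (-1) ^ p.2 * poch ρ (p.1 + p.2) / (p.2 ! * p.1 !) * (2 * z) ^ p.1

variable {ρ : ℝ}

theorem gegenbauer_eq_sum_antidiagonalTwo (hρ : ∀ n : ℕ, ρ + n ≠ 0) (n : ℕ) (z : ℝ) :
    gegenbauer ρ n z = ∑ p ∈ antidiagonalTwo n, gegenbauerTerm ρ z p := by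
  rw [gegenbauer, sum_antidiagonalTwo]
  refine sum_congr rfl fun k hk => ?_
  obtain ⟨m, rfl⟩ : ∃ m, n = m + 2 * k := ⟨n - 2 * k, by grind⟩
  have hΓ : Real.Gamma ρ ≠ 0 := Real.Gamma_ne_zero fun m h => hρ m (by rw [h]; ring)
  rw [gegenbauerTerm, Nat.add_sub_cancel,
    show ρ + (m + 2 * k : ℕ) - k = ρ + (m + k : ℕ) by push_cast; ring,
    Gamma_add_natCast_eq_poch hρ]
  field_simp

theorem isGegenbauerSeq_gegenbauer (hρ : ∀ n : ℕ, ρ + n ≠ 0) (z : ℝ) :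
    IsGegenbauerSeq ρ z (fun n => gegenbauer ρ n z) := by
  simp only [gegenbauer_eq_sum_antidiagonalTwo hρ]
  refine ⟨?_, ?_, fun n => ?_⟩
  · simp [sum_antidiagonalTwo, gegenbauerTerm, poch_zero]
  · simp only [sum_antidiagonalTwo, gegenbauerTerm, Nat.reduceDiv, zero_add, range_one,
      sum_singleton, mul_zero, tsub_zero, add_zero, poch_succ, poch_zero, pow_zero, pow_one,
      Nat.factorial_zero, Nat.factorial_one, Nat.cast_zero, Nat.cast_one]
    ring
  · rw [sub_eq_add_neg, ← neg_mul, mul_sum, mul_sum, mul_sum]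
    apply sum_antidiagonalTwo_eq_add
    · simp only [gegenbauerTerm, add_zero, poch_succ ρ (n + 1), Nat.factorial_succ (n + 1)]
      push_cast
      field_simp
      ring
    · rintro k rfl
      simp only [gegenbauerTerm, zero_add, poch_succ ρ k, Nat.factorial_succ k]
      push_cast
      field_simp
      ring
    · rintro l k rfl
      simp only [gegenbauerTerm, Nat.factorial_succ, poch_succ, pow_succ,
        show l + 1 + (k + 1) = l + k + 1 + 1 by ring, show l + (k + 1) = l + k + 1 by ring,
        show l + 1 + k = l + k + 1 by ring]
      push_cast
      field_simp
      ring

end Gegenbauer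

section Connection

variable {a c ω : ℝ}

/-- The coefficients `w` of the connection formula `C^a_n = ∑_{l + 2k = n} (c + l) w(l, k) C^c_l`.
The factor `c + l` is left out so that the recurrence satisfied by `w` is free of division. -/
noncomputable def connectionCoeff (a c : ℝ) (l k : ℕ) : ℝ :=
  poch a (l + k) / poch c (l + k + 1) * (poch (a - c) k / k !)

theorem connectionCoeff_zero_zero (hc : c ≠ 0) : c * connectionCoeff a c 0 0 = 1 := by
  simp [connectionCoeff, poch_zero, poch_succ, hc]

theorem connectionCoeff_succ_zero (hc : ∀ n : ℕ, c + n ≠ 0) (l : ℕ) :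
    (c + l + 1) * connectionCoeff a c (l + 1) 0 = (a + l) * connectionCoeff a c l 0 := by
  have hl := poch_ne_zero hc (l + 1)
  have hl' : c + l + 1 ≠ 0 := by simpa [add_assoc] using hc (l + 1)
  simp only [connectionCoeff, add_zero, poch_zero, poch_succ a, poch_succ c (l + 1)]
  push_cast
  rw [← add_assoc]
  field_simp

theorem connectionCoeff_zero_succ (hc : ∀ n : ℕ, c + n ≠ 0) (k : ℕ) :
    (2 * k + 2) * (c * connectionCoeff a c 0 (k + 1)) =
      (2 * k + 1 + a) * (2 * c * connectionCoeff a c 1 k) -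
        (2 * k + 2 * a) * (c * connectionCoeff a c 0 k) := by
  have hk := poch_ne_zero hc (k + 1)
  have hk' : c + k + 1 ≠ 0 := by simpa [add_assoc] using hc (k + 1)
  simp only [connectionCoeff, zero_add, add_comm 1 k, poch_succ a, poch_succ c (k + 1),
    poch_succ (a - c), Nat.factorial_succ]
  push_cast
  rw [← add_assoc]
  field_simp
  ring

theorem connectionCoeff_succ_succ (hc : ∀ n : ℕ, c + n ≠ 0) (l k : ℕ) :
    (l + 2 * k + 3) * ((c + l + 1) * connectionCoeff a c (l + 1) (k + 1)) =
      (l + 2 * k + 2 + a) * ((l + 1) * connectionCoeff a c l (k + 1) +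
        (l + 1 + 2 * c) * connectionCoeff a c (l + 2) k) -
      (l + 2 * k + 1 + 2 * a) * ((c + l + 1) * connectionCoeff a c (l + 1) k) := by
  have hp := poch_ne_zero hc (l + k + 2)
  have hs : c + l + k + 2 ≠ 0 := by
    have := hc (l + k + 2)
    push_cast at this
    simpa only [add_assoc] using this
  simp only [connectionCoeff, show l + 1 + (k + 1) = l + k + 1 + 1 by ring,
    show l + (k + 1) = l + k + 1 by ring, show l + 2 + k = l + k + 1 + 1 by ring,
    show l + 1 + k = l + k + 1 by ring, poch_succ a, poch_succ c (l + k + 2),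
    poch_succ (a - c), Nat.factorial_succ]
  push_cast
  simp only [← add_assoc]
  field_simp
  ring

theorem connection_sum_mul_eq {s : ℕ → ℝ} (hs : IsGegenbauerSeq c ω s) (w : ℕ → ℕ → ℝ) (n : ℕ) :
    2 * ω * ∑ p ∈ antidiagonalTwo (n + 1), (c + p.1) * w p.1 p.2 * s p.1 =
      ∑ p ∈ antidiagonalTwo (n + 1), (p.1 + 1) * w p.1 p.2 * s (p.1 + 1) +
        ∑ p ∈ antidiagonalTwo n, (p.1 + 2 * c) * w (p.1 + 1) p.2 * s p.1 := by
  rw [← sub_eq_iff_eq_add', mul_sum, ← sum_sub_distrib, sum_antidiagonalTwo_succ]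
  · refine sum_congr rfl fun p _ => ?_
    push_cast
    linear_combination -w (p.1 + 1) p.2 * hs.add_two p.1
  · intro k
    rw [hs.zero, zero_add, hs.one]
    push_cast
    ring

theorem isGegenbauerSeq_connection (a : ℝ) (hc : ∀ n : ℕ, c + n ≠ 0) {s : ℕ → ℝ}
    (hs : IsGegenbauerSeq c ω s) :
    IsGegenbauerSeq a ω fun n =>
      ∑ p ∈ antidiagonalTwo n, (c + p.1) * connectionCoeff a c p.1 p.2 * s p.1 := by
  have h0 : c ≠ 0 := by simpa using hc 0
  have h1 := connectionCoeff_succ_zero (a := a) hc 0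
  refine ⟨?_, ?_, fun n => ?_⟩
  · simpa [sum_antidiagonalTwo, hs.zero] using connectionCoeff_zero_zero h0
  · rw [Nat.cast_zero, add_zero, add_zero] at h1
    simp only [sum_antidiagonalTwo, Nat.reduceDiv, zero_add, range_one, sum_singleton, mul_zero,
      tsub_zero, Nat.cast_one, hs.one]
    linear_combination 2 * c * ω * h1 + 2 * ω * a * connectionCoeff_zero_zero (a := a) h0
  · rw [show ∀ x, 2 * (n + 1 + a) * ω * x = (n + 1 + a) * (2 * ω * x) by intro; ring,
      connection_sum_mul_eq hs, mul_add, add_sub_assoc, mul_sum, mul_sum, mul_sum, mul_sum,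
      ← sum_sub_distrib]
    apply sum_antidiagonalTwo_eq_add
    · have := connectionCoeff_succ_zero (a := a) hc (n + 1)
      push_cast at this ⊢
      linear_combination (n + 2) * s (n + 2) * this
    · rintro k rfl
      have := connectionCoeff_zero_succ (a := a) hc k
      push_cast at this ⊢
      linear_combination s 0 * this
    · rintro l k rfl
      have := connectionCoeff_succ_succ (a := a) hc l k
      push_cast at this ⊢
      linear_combination s (l + 1) * this

end Connection

section Multichoose

theorem succ_mul_multichoose_succ {K : Type*} [Field K] [CharZero K] (a : K) (n : ℕ) :
    (n + 1) * Ring.multichoose a (n + 1) = (a + n) * Ring.multichoose a n := by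
  have h (k : ℕ) : (k ! : K) * Ring.multichoose a k = (ascPochhammer K k).eval a := by
    rw [← nsmul_eq_mul, Ring.factorial_nsmul_multichoose_eq_ascPochhammer,
      Polynomial.ascPochhammer_smeval_eq_eval]
  have hn := h (n + 1)
  rw [ascPochhammer_succ_eval, ← h, Nat.factorial_succ] at hn
  push_cast at hn
  refine mul_left_cancel₀ (Nat.cast_ne_zero.mpr n.factorial_ne_zero : (n ! : K) ≠ 0) ?_
  linear_combination hn

theorem poch_div_factorial (a : ℝ) (n : ℕ) : poch a n / n ! = Ring.multichoose a n := by
  induction n with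
  | zero => simp [poch_zero]
  | succ n ih =>
    refine mul_left_cancel₀ (n.cast_add_one_ne_zero : (n + 1 : ℝ) ≠ 0) ?_
    rw [succ_mul_multichoose_succ, ← ih, poch_succ, Nat.factorial_succ]
    push_cast
    field_simp

end Multichoose

section GeneratingSeries

open PowerSeries

variable {K : Type*} [Field K]

theorem isGegenbauerSeq_coeff {a ω : K} {F : K⟦X⟧} (h0 : constantCoeff F = 1)
    (hF : (1 - C (2 * ω) * X + X ^ 2) * d⁄dX K F = C (2 * a) * ((C ω - X) * F)) :
    IsGegenbauerSeq a ω fun n => coeff n F := by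
  have hF' : d⁄dX K F - C (2 * ω) * (X * d⁄dX K F) + X * (X * d⁄dX K F) =
      C (2 * a) * (C ω * F - X * F) := by
    linear_combination hF
  have coeff_X_mul_derivative (n : ℕ) : coeff n (X * d⁄dX K F) = n * coeff n F := by
    cases n with
    | zero => simp
    | succ n => simp [coeff_succ_X_mul, coeff_derivative, mul_comm]
  refine ⟨by simpa using h0, ?_, fun n => ?_⟩
  · have := congrArg (coeff 0) hF'
    simp only [map_add, map_sub, coeff_C_mul, coeff_derivative,
      coeff_zero_eq_constantCoeff_apply, h0] at this
    simpa [mul_assoc] using this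
  · have := congrArg (coeff (n + 1)) hF'
    simp only [map_add, map_sub, coeff_C_mul, coeff_succ_X_mul, coeff_derivative,
      coeff_X_mul_derivative] at this
    push_cast at this
    linear_combination this

variable [CharZero K]

/-- The formal power series `(1 - z X)^{-a}`, with the generalized binomial coefficients written as
`Ring.multichoose` so that no signs occur. -/
noncomputable def oneSubCPowSeries (a z : K) : K⟦X⟧ :=
  PowerSeries.mk fun n => Ring.multichoose a n * z ^ n

theorem coeff_oneSubCPowSeries (a z : K) (n : ℕ) :
    coeff n (oneSubCPowSeries a z) = Ring.multichoose a n * z ^ n :=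
  coeff_mk n _

theorem constantCoeff_oneSubCPowSeries (a z : K) : constantCoeff (oneSubCPowSeries a z) = 1 := by
  rw [← coeff_zero_eq_constantCoeff_apply, coeff_oneSubCPowSeries]
  simp

theorem one_sub_mul_derivative_oneSubCPowSeries (a z : K) :
    (1 - C z * X) * d⁄dX K (oneSubCPowSeries a z) = C (a * z) * oneSubCPowSeries a z := by
  ext n
  rw [sub_mul, one_mul, mul_assoc, map_sub, coeff_C_mul, coeff_C_mul, coeff_derivative,
    coeff_oneSubCPowSeries, coeff_oneSubCPowSeries]
  cases n with
  | zero => simp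
  | succ n =>
    have h := succ_mul_multichoose_succ a (n + 1)
    rw [coeff_succ_X_mul, coeff_derivative, coeff_oneSubCPowSeries]
    push_cast at h ⊢
    linear_combination z ^ (n + 2) * h

theorem isGegenbauerSeq_sum_multichoose {z w ω : K} (a : K) (hzw : z * w = 1)
    (hω : z + w = 2 * ω) :
    IsGegenbauerSeq a ω fun n => ∑ p ∈ antidiagonal n,
      (Ring.multichoose a p.1 * z ^ p.1) * (Ring.multichoose a p.2 * w ^ p.2) := by
  have hz := one_sub_mul_derivative_oneSubCPowSeries a z
  have hw := one_sub_mul_derivative_oneSubCPowSeries a w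
  simp only [← coeff_oneSubCPowSeries, ← coeff_mul]
  set A := oneSubCPowSeries a z
  set B := oneSubCPowSeries a w
  have hC : (C z * C w : K⟦X⟧) = 1 := by rw [← map_mul, hzw, map_one]
  have hCω : (C z + C w : K⟦X⟧) = 2 * C ω := by rw [← map_add, hω, map_mul, map_ofNat]
  refine isGegenbauerSeq_coeff ?_ ?_
  · rw [map_mul, constantCoeff_oneSubCPowSeries, constantCoeff_oneSubCPowSeries, one_mul]
  · rw [Derivation.leibniz, smul_eq_mul, smul_eq_mul]
    simp only [map_mul, map_ofNat] at hz hw ⊢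
    linear_combination B * (1 - C w * X) * hz + A * (1 - C z * X) * hw -
      (X ^ 2 * (A * d⁄dX K B + B * d⁄dX K A) + 2 * C a * X * A * B) * hC +
      (X * (A * d⁄dX K B + B * d⁄dX K A) + C a * A * B) * hCω

end GeneratingSeries

section Convergence

theorem summable_norm_mul_pow_of_succ_eq {𝕜 : Type*} [NormedField 𝕜] {f ρ : ℕ → 𝕜}
    {x : 𝕜} (hf : ∀ n, f (n + 1) = ρ n * f n) (hρ : Tendsto ρ atTop (𝓝 1)) (hx : ‖x‖ < 1) :
    Summable fun n => ‖f n * x ^ n‖ := by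
  obtain ⟨r, hxr, hr⟩ := exists_between hx
  have hlim : Tendsto (fun n => ‖ρ n * x‖) atTop (𝓝 ‖x‖) := by
    simpa using (hρ.mul_const x).norm
  refine summable_of_ratio_norm_eventually_le hr ?_
  filter_upwards [hlim.eventually_le_const hxr] with n hn
  rw [norm_norm, norm_norm, hf, pow_succ,
    show ρ n * f n * (x ^ n * x) = ρ n * x * (f n * x ^ n) by ring, norm_mul]
  gcongr

theorem summable_norm_multichoose_mul_pow {𝕜 : Type*} [RCLike 𝕜] (a : 𝕜) {x : 𝕜}
    (hx : ‖x‖ < 1) : Summable fun n : ℕ => ‖Ring.multichoose a n * x ^ n‖ := by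
  refine summable_norm_mul_pow_of_succ_eq (ρ := fun n => (a + n) / (1 + n)) (fun n => ?_) ?_ hx
  · have hn : (1 + n : 𝕜) ≠ 0 := by exact_mod_cast (show 1 + n ≠ 0 by omega)
    rw [div_mul_eq_mul_div, eq_div_iff hn, ← succ_mul_multichoose_succ]
    ring
  · simpa using tendsto_add_mul_div_add_mul_atTop_nhds a 1 1 (one_ne_zero (α := 𝕜))

theorem hasSum_multichoose_mul_pow (a : ℂ) {x : ℂ} (hx : ‖x‖ < 1) :
    HasSum (fun n : ℕ => Ring.multichoose a n * x ^ n) ((1 - x) ^ (-a)) := by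
  have h := (Complex.one_div_one_sub_cpow_hasFPowerSeriesOnBall_zero a).hasSum (y := x)
    (by rw [← ENNReal.ofReal_one, Metric.eball_ofReal]; simpa using hx)
  simpa [Ring.multichoose_eq, Complex.cpow_neg, mul_comm] using h

theorem cpow_ofReal_mul_conj_cpow_ofReal {z : ℂ} (hz : z ∈ Complex.slitPlane) (r : ℝ) :
    z ^ (r : ℂ) * conj z ^ (r : ℂ) = ((Complex.normSq z ^ r : ℝ) : ℂ) := by
  rw [Complex.conj_cpow _ _ (Complex.slitPlane_arg_ne_pi hz), Complex.conj_ofReal, Complex.mul_conj,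
    Complex.normSq_eq_norm_sq, Complex.norm_cpow_real, Complex.normSq_eq_norm_sq,
    ← Real.rpow_pow_comm (norm_nonneg z)]

theorem exists_complex_norm_eq_one_re_eq {ω : ℝ} (hω : |ω| ≤ 1) : ∃ z : ℂ, ‖z‖ = 1 ∧ z.re = ω :=
  ⟨Complex.exp (Real.arccos ω * Complex.I), Complex.norm_exp_ofReal_mul_I _, by
    rw [Complex.exp_ofReal_mul_I_re, Real.cos_arccos (abs_le.mp hω).1 (abs_le.mp hω).2]⟩

theorem one_sub_mem_slitPlane {x : ℂ} (hx : ‖x‖ < 1) : 1 - x ∈ Complex.slitPlane := by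
  simpa [sub_eq_add_neg] using Complex.mem_slitPlane_of_norm_lt_one (norm_neg x ▸ hx)

variable {a ω h : ℝ} {s : ℕ → ℝ}

theorem IsGegenbauerSeq.ofReal_mul_pow_eq_sum (hs : IsGegenbauerSeq a ω s) {z : ℂ} (hz : ‖z‖ = 1)
    (hzω : z.re = ω) (n : ℕ) :
    ((s n * h ^ n : ℝ) : ℂ) = ∑ p ∈ antidiagonal n,
      (Ring.multichoose (a : ℂ) p.1 * (z * h) ^ p.1) *
        (Ring.multichoose (a : ℂ) p.2 * (conj z * h) ^ p.2) := by
  have hconj : z * conj z = 1 := by simp [Complex.mul_conj, Complex.normSq_eq_norm_sq, hz]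
  have hre : z + conj z = 2 * (ω : ℂ) := by simp [Complex.add_conj, hzω]
  have hsn : (s n : ℂ) = _ := congrFun
    ((hs.map Complex.ofRealHom).unique (isGegenbauerSeq_sum_multichoose (a : ℂ) hconj hre)) n
  rw [Complex.ofReal_mul, hsn, sum_mul]
  refine sum_congr rfl fun p hp => ?_
  rw [← mem_antidiagonal.mp hp]
  push_cast
  ring

theorem IsGegenbauerSeq.summable_norm_mul_pow (hs : IsGegenbauerSeq a ω s) (hω : |ω| ≤ 1)
    (hh : |h| < 1) : Summable fun n => ‖s n * h ^ n‖ := by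
  obtain ⟨z, hz, hzω⟩ := exists_complex_norm_eq_one_re_eq hω
  have key := summable_norm_sum_mul_antidiagonal_of_summable_norm
    (summable_norm_multichoose_mul_pow (a : ℂ) (x := z * h) (by simpa [hz] using hh))
    (summable_norm_multichoose_mul_pow (a : ℂ) (x := conj z * h) (by simpa [hz] using hh))
  simpa only [← hs.ofReal_mul_pow_eq_sum hz hzω, Complex.norm_real] using key

theorem IsGegenbauerSeq.hasSum_mul_pow (hs : IsGegenbauerSeq a ω s) (hω : |ω| ≤ 1)
    (hh : |h| < 1) : HasSum (fun n => s n * h ^ n) ((h ^ 2 - 2 * h * ω + 1) ^ (-a)) := by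
  obtain ⟨z, hz, hzω⟩ := exists_complex_norm_eq_one_re_eq hω
  have hzh : ‖z * h‖ < 1 := by simpa [hz] using hh
  have hzh' : ‖conj z * h‖ < 1 := by simpa [hz] using hh
  have hnorm : Complex.normSq (1 - z * h) = h ^ 2 - 2 * h * ω + 1 := by
    have : z.re * z.re + z.im * z.im = 1 := by
      rw [← Complex.normSq_apply, Complex.normSq_eq_norm_sq, hz, one_pow]
    rw [hzω] at this
    simp only [Complex.normSq_apply, Complex.sub_re, Complex.sub_im, Complex.one_re,
      Complex.one_im, Complex.re_mul_ofReal, Complex.im_mul_ofReal, hzω]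
    linear_combination h ^ 2 * this
  have hprod : (1 - z * h) ^ (-a : ℂ) * (1 - conj z * h) ^ (-a : ℂ) =
      (((h ^ 2 - 2 * h * ω + 1) ^ (-a) : ℝ) : ℂ) := by
    simpa [hnorm] using cpow_ofReal_mul_conj_cpow_ofReal (one_sub_mem_slitPlane hzh) (-a)
  have hcauchy := tsum_mul_tsum_eq_tsum_sum_antidiagonal_of_summable_norm
    (summable_norm_multichoose_mul_pow (a : ℂ) hzh) (summable_norm_multichoose_mul_pow (a : ℂ) hzh')
  simp only [← hs.ofReal_mul_pow_eq_sum hz hzω, (hasSum_multichoose_mul_pow _ hzh).tsum_eq,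
    (hasSum_multichoose_mul_pow _ hzh').tsum_eq, hprod, ← Complex.ofReal_tsum,
    Complex.ofReal_inj] at hcauchy
  exact hcauchy ▸ (hs.summable_norm_mul_pow hω hh).of_norm.hasSum

end Convergence

section DoubleSeries

variable {a c ω h t : ℝ} {s : ℕ → ℝ}

/-- A majorant, in absolute value, of `(c + l) * (a)_{l + k} / (c)_{l + k + 1}` that depends on
`n = l + k` only, so that the bound for the double series factors over `l` and `k`. -/
noncomputable def pochRatioMajorant (a c : ℝ) (n : ℕ) : ℝ :=
  poch a n * (|c| + n) / poch c (n + 1)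

theorem bddAbove_pochRatioMajorant_mul_pow (hc : ∀ n : ℕ, c + n ≠ 0) (ht : |t| < 1) :
    BddAbove (Set.range fun n => ‖pochRatioMajorant a c n * t ^ n‖) := by
  let ρ : ℕ → ℝ := fun n => (a + 1 * n) / (c + 1 + 1 * n) * ((|c| + 1 + 1 * n) / (|c| + 1 * n))
  have hρ : Tendsto ρ atTop (𝓝 1) := by
    simpa only [ρ, div_one, one_mul] using
      (tendsto_add_mul_div_add_mul_atTop_nhds a (c + 1) 1 one_ne_zero).mul
        (tendsto_add_mul_div_add_mul_atTop_nhds (|c| + 1) |c| 1 (one_ne_zero (α := ℝ)))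
  have hsucc (n : ℕ) : pochRatioMajorant a c (n + 1) = ρ n * pochRatioMajorant a c n := by
    have hc0 : 0 < |c| := abs_pos.mpr (by simpa using hc 0)
    have hn := poch_ne_zero hc (n + 1)
    have hn' : c + 1 + n ≠ 0 := by
      simpa [add_assoc, add_comm, add_left_comm] using hc (n + 1)
    simp only [ρ, pochRatioMajorant, poch_succ a, poch_succ c (n + 1), one_mul]
    push_cast
    rw [← add_assoc c, add_right_comm c]
    field_simp
    ring
  exact (summable_norm_mul_pow_of_succ_eq hsucc hρ ht).tendsto_atTop_zero.bddAbove_range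

theorem norm_connectionCoeff_le (l k : ℕ) :
    ‖(c + l) * connectionCoeff a c l k‖ ≤
      ‖pochRatioMajorant a c (l + k)‖ * ‖Ring.multichoose (a - c) k‖ := by
  have hcl : ‖c + l‖ ≤ ‖|c| + ((l + k : ℕ) : ℝ)‖ := by
    rw [Real.norm_of_nonneg (by positivity : 0 ≤ |c| + ((l + k : ℕ) : ℝ))]
    refine (norm_add_le _ _).trans ?_
    simp
  rw [connectionCoeff, poch_div_factorial, pochRatioMajorant, norm_mul, norm_mul, norm_div,
    norm_div, norm_mul, ← mul_assoc, ← mul_div_assoc, mul_comm ‖c + l‖]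
  gcongr

theorem summable_connection (hc : ∀ n : ℕ, c + n ≠ 0) (hω : |ω| ≤ 1) (hh : |h| < 1)
    (hs : IsGegenbauerSeq c ω s) :
    Summable fun p : ℕ × ℕ =>
      (c + p.1) * connectionCoeff a c p.1 p.2 * s p.1 * h ^ (p.1 + 2 * p.2) := by
  obtain ⟨t, hht, ht⟩ := exists_between hh
  have ht0 : 0 < t := (abs_nonneg h).trans_lt hht
  have hr : |h / t| < 1 := by rwa [abs_div, abs_of_pos ht0, div_lt_one ht0]
  have hr' : ‖h * (h / t)‖ < 1 := by
    rw [norm_mul]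
    exact mul_lt_one_of_nonneg_of_lt_one_left (norm_nonneg _) hh hr.le
  obtain ⟨M, hM⟩ := bddAbove_pochRatioMajorant_mul_pow (a := a) hc ((abs_of_pos ht0).trans_lt ht)
  have majorant := ((hs.summable_norm_mul_pow hω hr).mul_of_nonneg
    (summable_norm_multichoose_mul_pow (a - c) hr') (fun _ => norm_nonneg _)
    fun _ => norm_nonneg _).mul_left M
  refine .of_norm_bounded majorant fun ⟨l, k⟩ => ?_
  have hpow : h ^ (l + 2 * k) = t ^ (l + k) * ((h / t) ^ l * (h * (h / t)) ^ k) := by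
    rw [mul_pow, div_pow, div_pow]
    field_simp
    ring
  calc ‖(c + l) * connectionCoeff a c l k * s l * h ^ (l + 2 * k)‖
      ≤ ‖pochRatioMajorant a c (l + k)‖ * ‖Ring.multichoose (a - c) k‖ * ‖s l‖ *
          ‖h ^ (l + 2 * k)‖ := by
        rw [norm_mul, norm_mul]
        gcongr
        exact norm_connectionCoeff_le l k
    _ = ‖pochRatioMajorant a c (l + k) * t ^ (l + k)‖ *
          (‖s l * (h / t) ^ l‖ * ‖Ring.multichoose (a - c) k * (h * (h / t)) ^ k‖) := by
        rw [hpow]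
        simp only [norm_mul]
        ring
    _ ≤ M * (‖s l * (h / t) ^ l‖ * ‖Ring.multichoose (a - c) k * (h * (h / t)) ^ k‖) := by
        gcongr
        exact hM (Set.mem_range_self _)

theorem hasSum_connection (hc : ∀ n : ℕ, c + n ≠ 0) (hω : |ω| ≤ 1) (hh : |h| < 1)
    (hs : IsGegenbauerSeq c ω s) :
    HasSum (fun p : ℕ × ℕ =>
      (c + p.1) * connectionCoeff a c p.1 p.2 * s p.1 * h ^ (p.1 + 2 * p.2))
      ((h ^ 2 - 2 * h * ω + 1) ^ (-a)) := by
  have regroup (n : ℕ) : ∑ p ∈ antidiagonalTwo n,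
      (c + p.1) * connectionCoeff a c p.1 p.2 * s p.1 * h ^ (p.1 + 2 * p.2) =
        (∑ p ∈ antidiagonalTwo n, (c + p.1) * connectionCoeff a c p.1 p.2 * s p.1) * h ^ n := by
    rw [sum_mul]
    exact sum_congr rfl fun p hp => by rw [mem_antidiagonalTwo.mp hp]
  have hdouble := (summable_connection (a := a) hc hω hh hs).hasSum
  have hsingle := hasSum_sum_antidiagonalTwo hdouble
  simp only [regroup] at hsingle
  exact hsingle.unique ((isGegenbauerSeq_connection a hc hs).hasSum_mul_pow hω hh) ▸ hdouble

theorem mul_F21_eq_tsum_connection (hc : ∀ n : ℕ, c + n ≠ 0) (l : ℕ) (x : ℝ) :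
    poch a l / poch c l * h ^ l * x * F21 (a + l) (a - c) (c + 1 + l) (h ^ 2) =
      ∑' k, (c + l) * connectionCoeff a c l k * x * h ^ (l + 2 * k) := by
  rw [F21, ← tsum_mul_left]
  refine tsum_congr fun k => ?_
  have hl := poch_ne_zero hc l
  have hl' := hc l
  have hc' : poch c (l + k + 1) = poch c l * (c + l) * poch (c + 1 + l) k := by
    rw [add_right_comm, poch_add, poch_succ, Nat.cast_succ, ← add_assoc, add_right_comm]
  have hk : poch (c + 1 + l) k ≠ 0 := right_ne_zero_of_mul (hc' ▸ poch_ne_zero hc _)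
  rw [connectionCoeff, hc', poch_add a, pow_add, pow_mul]
  field_simp

end DoubleSeries

theorem stmt5_general (a b h ω : ℝ) (hb : ∀ n : ℕ, b - 1 + n ≠ 0) (hh : |h| < 1) (hω : |ω| ≤ 1) :
    Summable (fun l : ℕ =>
        |poch a l / poch (b - 1) l * h ^ l * gegenbauer (b - 1) l ω *
          F21 (a + l) (a - b + 1) (b + l) (h ^ 2)|) ∧
      (h ^ 2 - 2 * h * ω + 1) ^ (-a) =
        ∑' l : ℕ, poch a l / poch (b - 1) l * h ^ l * gegenbauer (b - 1) l ω *
          F21 (a + l) (a - b + 1) (b + l) (h ^ 2) := by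
  have hsum := hasSum_connection (a := a) hb hω hh (isGegenbauerSeq_gegenbauer hb ω)
  have hterm (l : ℕ) := mul_F21_eq_tsum_connection (a := a) (h := h) hb l (gegenbauer (b - 1) l ω)
  rw [sub_add_cancel, ← sub_add] at hterm
  simp only [hterm]
  exact ⟨hsum.summable.prod.abs, hsum.tsum_eq ▸ hsum.summable.tsum_prod⟩

theorem stmt5 (a b h ω : ℝ) (ha : 0 < a) (hb : 1 < b) (hh : |h| < 1) (hω : |ω| ≤ 1) :
    Summable (fun l : ℕ =>
        |poch a l / poch (b - 1) l * h ^ l * gegenbauer (b - 1) l ω *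
          F21 (a + l) (a - b + 1) (b + l) (h ^ 2)|) ∧
      (h ^ 2 - 2 * h * ω + 1) ^ (-a) =
        ∑' l : ℕ, poch a l / poch (b - 1) l * h ^ l * gegenbauer (b - 1) l ω *
          F21 (a + l) (a - b + 1) (b + l) (h ^ 2) :=
  stmt5_general a b h ω (fun n => (add_pos_of_pos_of_nonneg (sub_pos.mpr hb) n.cast_nonneg).ne')
    hh hω
end

section
/- For λ > 0 and nonnegative integers m, n, the Gegenbauer polynomials are orthogonal on [-1,1] with weight (1-x²)^{λ-1/2}: ∫_{-1}^{1} C^λ_m(x) C^λ_n(x) (1-x²)^{λ-1/2} dx = δ_{mn} · π · 2^{1-2λ} Γ(n+2λ) / (n! (n+λ) Γ(λ)²). -/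
open Finset

/-!
The polynomial `C^λ_n` satisfies the Gegenbauer equation `L y = -n (n + 2 λ) y`, where
`L y = (1 - x²) y'' - (2 λ + 1) x y'`. Since `(1 - x²) ^ (λ - 1/2) * L y` is the derivative of
`(1 - x²) ^ (λ + 1/2) * y'`, integration by parts turns `n (n + 2 λ) ⟨p, C^λ_n⟩_λ` into
`⟨p', (C^λ_n)'⟩_{λ + 1}`. As `(C^λ_n)' = 2 λ C^{λ + 1}_{n - 1}`, the pair `(m, n)` at `λ` is reduced
to the pair `(m - 1, n - 1)` at `λ + 1`; once one of the degrees reaches `0` its derivative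
vanishes, and `⟨1, 1⟩_λ` is a Beta integral.
-/

open Polynomial MeasureTheory

theorem ofReal_rpow_mul_one_sub_rpow (u v : ℝ) {x : ℝ} (hx : x ∈ Set.uIcc (0 : ℝ) 1) :
    ((x ^ (u - 1) * (1 - x) ^ (v - 1) : ℝ) : ℂ) =
      (x : ℂ) ^ ((u : ℂ) - 1) * (1 - (x : ℂ)) ^ ((v : ℂ) - 1) := by
  rw [Set.uIcc_of_le zero_le_one] at hx
  rw [Complex.ofReal_mul, Complex.ofReal_cpow hx.1, Complex.ofReal_cpow (sub_nonneg.2 hx.2)]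
  push_cast
  rfl

theorem intervalIntegrable_rpow_mul_one_sub_rpow {u v : ℝ} (hu : 0 < u) (hv : 0 < v) :
    IntervalIntegrable (fun x : ℝ ↦ x ^ (u - 1) * (1 - x) ^ (v - 1)) volume 0 1 := by
  have h : IntervalIntegrable
      (fun x : ℝ ↦ ((x ^ (u - 1) * (1 - x) ^ (v - 1) : ℝ) : ℂ)) volume 0 1 :=
    (Complex.betaIntegral_convergent (u := u) (v := v) (by simpa) (by simpa)).congr
      fun x hx ↦ (ofReal_rpow_mul_one_sub_rpow u v (Set.uIoc_subset_uIcc hx)).symm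
  rw [intervalIntegrable_iff] at h ⊢
  exact h.re

theorem integral_rpow_mul_one_sub_rpow {u v : ℝ} (hu : 0 < u) (hv : 0 < v) :
    ∫ x in (0 : ℝ)..1, x ^ (u - 1) * (1 - x) ^ (v - 1) =
      Real.Gamma u * Real.Gamma v / Real.Gamma (u + v) := by
  have h := Complex.betaIntegral_eq_Gamma_mul_div u v (by simpa) (by simpa)
  rw [Complex.betaIntegral, ← intervalIntegral.integral_congr
    fun x hx ↦ ofReal_rpow_mul_one_sub_rpow u v hx, intervalIntegral.integral_ofReal,
    ← Complex.ofReal_add, Complex.Gamma_ofReal, Complex.Gamma_ofReal, Complex.Gamma_ofReal] at h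
  exact_mod_cast h

theorem one_sub_sq_rpow_eq_four_rpow_mul (s : ℝ) {x : ℝ} (hx : x ∈ Set.uIcc (-1 : ℝ) 1) :
    (1 - x ^ 2) ^ s = 4 ^ s * ((x / 2 + 1 / 2) ^ s * (1 - (x / 2 + 1 / 2)) ^ s) := by
  rw [Set.uIcc_of_le (by norm_num)] at hx
  obtain ⟨hx₁, hx₂⟩ := hx
  rw [← Real.mul_rpow (by linarith) (by linarith),
    ← Real.mul_rpow (by norm_num) (mul_nonneg (by linarith) (by linarith))]
  ring_nf

theorem intervalIntegrable_one_sub_sq_rpow {s : ℝ} (hs : -1 < s) :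
    IntervalIntegrable (fun x : ℝ ↦ (1 - x ^ 2) ^ s) volume (-1) 1 := by
  have hs' : 0 < s + 1 := by linarith
  have h : IntervalIntegrable
      (fun x : ℝ ↦ 4 ^ s * ((1 / 2 * x + 1 / 2) ^ s * (1 - (1 / 2 * x + 1 / 2)) ^ s))
      volume (-1) 1 := by
    have h := (((intervalIntegrable_rpow_mul_one_sub_rpow hs' hs').comp_add_right
      (1 / 2)).comp_mul_left (c := 1 / 2)).const_mul (4 ^ s)
    norm_num only [add_sub_cancel_right] at h
    exact h
  refine h.congr fun x hx ↦ ?_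
  simp only [one_sub_sq_rpow_eq_four_rpow_mul s (Set.uIoc_subset_uIcc hx)]
  ring_nf

theorem integral_one_sub_sq_rpow_eq_Gamma_sq {s : ℝ} (hs : -1 < s) :
    ∫ x in (-1 : ℝ)..1, (1 - x ^ 2) ^ s =
      2 * 4 ^ s * (Real.Gamma (s + 1) ^ 2 / Real.Gamma (2 * (s + 1))) := by
  have hs' : 0 < s + 1 := by linarith
  have h := integral_rpow_mul_one_sub_rpow hs' hs'
  rw [add_sub_cancel_right] at h
  rw [intervalIntegral.integral_congr fun x hx ↦ one_sub_sq_rpow_eq_four_rpow_mul s hx,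
    intervalIntegral.integral_const_mul, intervalIntegral.integral_comp_div_add
      (fun t : ℝ ↦ t ^ s * (1 - t) ^ s) two_ne_zero (1 / 2),
    show (-1 : ℝ) / 2 + 1 / 2 = 0 by norm_num, show (1 : ℝ) / 2 + 1 / 2 = 1 by norm_num,
    h, smul_eq_mul, two_mul (s + 1)]
  ring

theorem integral_one_sub_sq_rpow {s : ℝ} (hs : -1 < s) :
    ∫ x in (-1 : ℝ)..1, (1 - x ^ 2) ^ s =
      √Real.pi * Real.Gamma (s + 1) / Real.Gamma (s + 3 / 2) := by
  have hdup : Real.Gamma (s + 1) * Real.Gamma (s + 3 / 2) =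
      Real.Gamma (2 * (s + 1)) * 2 ^ (1 - 2 * (s + 1)) * √Real.pi := by
    rw [← Real.Gamma_mul_Gamma_add_half, show s + 1 + 1 / 2 = s + 3 / 2 by ring]
  have hpow : (2 : ℝ) * 4 ^ s * 2 ^ (1 - 2 * (s + 1)) = 1 := by
    have hfour : (4 : ℝ) ^ s = 2 ^ (2 * s) := by
      rw [Real.rpow_mul zero_le_two]
      norm_num
    nth_rewrite 1 [← Real.rpow_one 2]
    rw [hfour, ← Real.rpow_add zero_lt_two, ← Real.rpow_add zero_lt_two,
      show 1 + 2 * s + (1 - 2 * (s + 1)) = 0 by ring, Real.rpow_zero]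
  have h₁ : Real.Gamma (s + 3 / 2) ≠ 0 := (Real.Gamma_pos_of_pos (by linarith)).ne'
  have h₂ : Real.Gamma (2 * (s + 1)) ≠ 0 := (Real.Gamma_pos_of_pos (by linarith)).ne'
  rw [integral_one_sub_sq_rpow_eq_Gamma_sq hs, ← mul_div_assoc, div_eq_div_iff h₂ h₁]
  linear_combination 2 * 4 ^ s * Real.Gamma (s + 1) * hdup +
    √Real.pi * Real.Gamma (s + 1) * Real.Gamma (2 * (s + 1)) * hpow

theorem hasDerivAt_mul_one_sub_sq_rpow {g : ℝ → ℝ} {g' s x : ℝ} (hg : HasDerivAt g g' x)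
    (hx : x ∈ Set.Ioo (-1 : ℝ) 1) :
    HasDerivAt (fun y ↦ g y * (1 - y ^ 2) ^ (s + 1))
      (((1 - x ^ 2) * g' - 2 * (s + 1) * x * g x) * (1 - x ^ 2) ^ s) x := by
  have hpos : 0 < 1 - x ^ 2 := by nlinarith [hx.1, hx.2]
  have hbase : HasDerivAt (fun y : ℝ ↦ 1 - y ^ 2) (-(2 * x)) x := by
    simpa using (hasDerivAt_pow 2 x).const_sub 1
  convert! hg.mul (hbase.rpow_const (p := s + 1) (Or.inl hpos.ne')) using 1
  rw [add_sub_cancel_right, Real.rpow_add_one hpos.ne']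
  ring

theorem integral_mul_deriv_mul_one_sub_sq_rpow {s : ℝ} (hs : -1 < s) {f f' g g' : ℝ → ℝ}
    (hf : ContinuousOn f (Set.uIcc (-1) 1)) (hg : ContinuousOn g (Set.uIcc (-1) 1))
    (hff' : ∀ x ∈ Set.Ioo (-1 : ℝ) 1, HasDerivAt f (f' x) x)
    (hgg' : ∀ x ∈ Set.Ioo (-1 : ℝ) 1, HasDerivAt g (g' x) x)
    (hf' : IntervalIntegrable f' volume (-1) 1)
    (hg' : ContinuousOn g' (Set.uIcc (-1) 1)) :
    ∫ x in (-1 : ℝ)..1, f x * (((1 - x ^ 2) * g' x - 2 * (s + 1) * x * g x) * (1 - x ^ 2) ^ s) =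
      -∫ x in (-1 : ℝ)..1, f' x * (g x * (1 - x ^ 2) ^ (s + 1)) := by
  have hs' : 0 < s + 1 := by linarith
  have hw : Continuous fun x : ℝ ↦ (1 - x ^ 2) ^ (s + 1) :=
    Continuous.rpow_const (by fun_prop) fun x ↦ Or.inr hs'.le
  have hmin : min (-1 : ℝ) 1 = -1 := by norm_num
  have hmax : max (-1 : ℝ) 1 = 1 := by norm_num
  rw [intervalIntegral.integral_mul_deriv_eq_deriv_mul_of_hasDerivAt hf
    (hg.mul hw.continuousOn) (by rwa [hmin, hmax])
    (fun x hx ↦ hasDerivAt_mul_one_sub_sq_rpow (hgg' x (by rwa [hmin, hmax] at hx))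
      (by rwa [hmin, hmax] at hx)) hf'
    ((intervalIntegrable_one_sub_sq_rpow hs).continuousOn_mul (by fun_prop))]
  simp [Real.zero_rpow hs'.ne']

/-- The coefficient of `x ^ (n - 2 * k)` in `C^λ_n`. It is meaningful only for `2 * k ≤ n`, because
of the truncated subtraction. -/
noncomputable def gegenbauerCoeff (lam : ℝ) (n k : ℕ) : ℝ :=
  (-1 : ℝ) ^ k * Real.Gamma (lam + n - k) /
    (Real.Gamma lam * k.factorial * (n - 2 * k).factorial) * 2 ^ (n - 2 * k)

theorem gegenbauerCoeff_succ_left {lam : ℝ} (hlam : lam ≠ 0) {n k : ℕ} (hk : 2 * k ≤ n) :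
    (n + 1 - 2 * k) * gegenbauerCoeff lam (n + 1) k = 2 * lam * gegenbauerCoeff (lam + 1) n k := by
  obtain ⟨r, rfl⟩ := Nat.exists_eq_add_of_le hk
  have hGamma : Real.Gamma (lam + (2 * k + r + 1 : ℕ) - k) =
      Real.Gamma (lam + 1 + (2 * k + r : ℕ) - k) := by
    push_cast
    ring_nf
  rw [gegenbauerCoeff, gegenbauerCoeff, hGamma, Real.Gamma_add_one hlam,
    show 2 * k + r + 1 - 2 * k = r + 1 by omega, show 2 * k + r - 2 * k = r by omega,
    Nat.factorial_succ]
  push_cast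
  have hr : (r + 1 : ℝ) ≠ 0 := by positivity
  field_simp
  ring

theorem gegenbauerCoeff_succ_right {lam : ℝ} (hlam : -1 < lam) {n k : ℕ} (hk : 2 * (k + 1) ≤ n) :
    4 * (k + 1) * (n - (k + 1) + lam) * gegenbauerCoeff lam n (k + 1) =
      -((n - 2 * k) * (n - 2 * k - 1) * gegenbauerCoeff lam n k) := by
  obtain ⟨r, rfl⟩ := Nat.exists_eq_add_of_le hk
  have hGamma : Real.Gamma (lam + (2 * (k + 1) + r : ℕ) - k) =
      (lam + k + r + 1) * Real.Gamma (lam + (2 * (k + 1) + r : ℕ) - (k + 1 : ℕ)) := by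
    have hne : lam + k + r + 1 ≠ 0 := by
      have : (0 : ℝ) ≤ k + r := by positivity
      linarith
    rw [show lam + (2 * (k + 1) + r : ℕ) - k = lam + k + r + 1 + 1 by push_cast; ring,
      show lam + (2 * (k + 1) + r : ℕ) - (k + 1 : ℕ) = lam + k + r + 1 by push_cast; ring,
      Real.Gamma_add_one hne]
  rw [gegenbauerCoeff, gegenbauerCoeff, hGamma, show 2 * (k + 1) + r - 2 * (k + 1) = r by omega,
    show 2 * (k + 1) + r - 2 * k = r + 1 + 1 by omega, Nat.factorial_succ k,
    Nat.factorial_succ (r + 1), Nat.factorial_succ r]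
  push_cast
  field_simp
  ring

/-- The Gegenbauer polynomial `C^λ_n` as an element of `ℝ[X]`, so that its derivatives can be
computed algebraically; `gegenbauer` is its evaluation. -/
noncomputable def gegenbauerPoly (lam : ℝ) (n : ℕ) : ℝ[X] :=
  ∑ k ∈ range (n / 2 + 1), monomial (n - 2 * k) (gegenbauerCoeff lam n k)

theorem eval_gegenbauerPoly (lam : ℝ) (n : ℕ) (x : ℝ) :
    (gegenbauerPoly lam n).eval x = gegenbauer lam n x := by
  simp only [gegenbauerPoly, gegenbauerCoeff, gegenbauer, eval_finsetSum, eval_monomial, mul_pow,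
    mul_assoc]

theorem gegenbauerPoly_zero {lam : ℝ} (h : Real.Gamma lam ≠ 0) : gegenbauerPoly lam 0 = 1 := by
  simp [gegenbauerPoly, gegenbauerCoeff, h]

theorem derivative_gegenbauerPoly_zero (lam : ℝ) : derivative (gegenbauerPoly lam 0) = 0 := by
  simp [gegenbauerPoly]

theorem derivative_gegenbauerPoly_succ {lam : ℝ} (hlam : lam ≠ 0) (n : ℕ) :
    derivative (gegenbauerPoly lam (n + 1)) = (2 * lam) • gegenbauerPoly (lam + 1) n := by
  have hrange : range (n / 2 + 1) ⊆ range ((n + 1) / 2 + 1) :=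
    range_subset_range.2 (by omega)
  simp only [gegenbauerPoly, derivative_sum, derivative_monomial, smul_sum, smul_monomial]
  rw [← sum_subset hrange]
  · refine sum_congr rfl fun k hk ↦ ?_
    have hkn : 2 * k ≤ n := by
      rw [mem_range] at hk
      omega
    rw [smul_eq_mul, ← gegenbauerCoeff_succ_left hlam hkn, Nat.cast_sub (by omega),
      show n + 1 - 2 * k - 1 = n - 2 * k by omega, mul_comm (gegenbauerCoeff _ _ _)]
    push_cast
    rfl
  · intro k _ hk
    rw [mem_range] at hk
    simp [show n + 1 - 2 * k = 0 by omega]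

/-- The Gegenbauer differential operator `y ↦ (1 - x²) y'' - (2 λ + 1) x y'`, whose eigenvectors are
the polynomials `C^λ_n`. -/
noncomputable def gegenbauerOperator (lam : ℝ) : ℝ[X] →ₗ[ℝ] ℝ[X] :=
  LinearMap.mulLeft ℝ (1 - X ^ 2) ∘ₗ derivative ∘ₗ derivative -
    LinearMap.mulLeft ℝ (C (2 * lam + 1) * X) ∘ₗ derivative

theorem gegenbauerOperator_apply (lam : ℝ) (p : ℝ[X]) :
    gegenbauerOperator lam p =
      (1 - X ^ 2) * derivative (derivative p) - C (2 * lam + 1) * X * derivative p :=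
  rfl

theorem gegenbauerOperator_monomial (lam a : ℝ) (j : ℕ) :
    gegenbauerOperator lam (monomial j a) =
      monomial (j - 2) (j * (j - 1) * a) - monomial j (j * (j + 2 * lam) * a) := by
  rw [gegenbauerOperator_apply]
  rcases j with _ | _ | j
  · simp
  · have hsub : 0 + 1 - 2 = 0 := rfl
    simp only [hsub, zero_add, Nat.cast_one, sub_self, mul_zero, zero_mul, map_zero, zero_sub,
      ← C_mul_X_pow_eq_monomial, pow_one, derivative_C_mul, derivative_X, derivative_C,
      mul_one, map_mul, map_add, map_one]
    ring
  · simp only [derivative_monomial, Nat.add_sub_cancel, Nat.cast_add, Nat.cast_one,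
      show j + 1 + 1 - 1 = j + 1 by omega, show j + 1 + 1 - 2 = j by omega]
    simp only [← C_mul_X_pow_eq_monomial, map_mul, map_add, map_sub, map_natCast, map_one, C_ofNat]
    ring

theorem gegenbauerOperator_gegenbauerPoly {lam : ℝ} (hlam : -1 < lam) (n : ℕ) :
    gegenbauerOperator lam (gegenbauerPoly lam n) =
      -((n * (n + 2 * lam)) • gegenbauerPoly lam n) := by
  let c : ℕ → ℝ := gegenbauerCoeff lam n
  -- The monomials of `L y + n (n + 2 λ) y` cancel between consecutive indices `k`.
  let u : ℕ → ℝ[X] := fun k ↦ monomial (n - 2 * k) (4 * k * (n - k + lam) * c k)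
  let v : ℕ → ℝ[X] := fun k ↦ monomial (n - 2 * k - 2) ((n - 2 * k) * (n - 2 * k - 1) * c k)
  have hu₀ : u 0 = 0 := by simp [u]
  have hv : v (n / 2) = 0 := by
    rcases Nat.even_or_odd' n with ⟨m, rfl | rfl⟩
    · simp [v]
    · simp [v, show (2 * m + 1) / 2 = m by omega]
  have huv : ∀ k ∈ range (n / 2), u (k + 1) = -v k := by
    intro k hk
    have hkn : 2 * (k + 1) ≤ n := by
      rw [mem_range] at hk
      omega
    have := gegenbauerCoeff_succ_right hlam hkn
    simp only [u, v, c, ← map_neg, ← this]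
    push_cast
    rfl
  have hterm : ∀ k ∈ range (n / 2 + 1),
      gegenbauerOperator lam (monomial (n - 2 * k) (c k)) +
        (n * (n + 2 * lam)) • monomial (n - 2 * k) (c k) = u k + v k := by
    intro k hk
    have hkn : 2 * k ≤ n := by
      rw [mem_range] at hk
      omega
    rw [gegenbauerOperator_monomial, Nat.cast_sub hkn, sub_add, smul_monomial, ← map_sub, add_comm,
      sub_eq_neg_add, ← map_neg]
    simp only [u, v, smul_eq_mul]
    push_cast
    congr 2
    ring
  rw [eq_neg_iff_add_eq_zero, gegenbauerPoly, map_sum, smul_sum, ← sum_add_distrib,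
    sum_congr rfl hterm, sum_add_distrib, sum_range_succ', sum_congr rfl huv, sum_range_succ,
    hu₀, hv, sum_neg_distrib]
  simp

/-- The pairing of two polynomials against the weight `(1 - x²) ^ (λ - 1/2)` on `[-1, 1]`. The
integral converges for `λ > -1/2`. -/
noncomputable def gegenbauerInner (lam : ℝ) (p q : ℝ[X]) : ℝ :=
  ∫ x in (-1 : ℝ)..1, p.eval x * q.eval x * (1 - x ^ 2) ^ (lam - 1 / 2)

theorem gegenbauerInner_comm (lam : ℝ) (p q : ℝ[X]) :
    gegenbauerInner lam p q = gegenbauerInner lam q p := by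
  simp only [gegenbauerInner, mul_comm (p.eval _)]

theorem gegenbauerInner_zero_left (lam : ℝ) (q : ℝ[X]) : gegenbauerInner lam 0 q = 0 := by
  simp [gegenbauerInner]

theorem gegenbauerInner_smul_left (lam c : ℝ) (p q : ℝ[X]) :
    gegenbauerInner lam (c • p) q = c * gegenbauerInner lam p q := by
  simp only [gegenbauerInner, ← intervalIntegral.integral_const_mul, eval_smul, smul_eq_mul,
    mul_assoc]

theorem gegenbauerInner_smul_right (lam c : ℝ) (p q : ℝ[X]) :
    gegenbauerInner lam p (c • q) = c * gegenbauerInner lam p q := by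
  rw [gegenbauerInner_comm, gegenbauerInner_smul_left, gegenbauerInner_comm]

theorem gegenbauerInner_operator_right {lam : ℝ} (hlam : -1 / 2 < lam) (p q : ℝ[X]) :
    gegenbauerInner lam p (gegenbauerOperator lam q) =
      -gegenbauerInner (lam + 1) (derivative p) (derivative q) := by
  have h := integral_mul_deriv_mul_one_sub_sq_rpow (s := lam - 1 / 2) (by linarith)
    p.continuousOn (derivative q).continuousOn (fun x _ ↦ p.hasDerivAt x)
    (fun x _ ↦ (derivative q).hasDerivAt x) ((derivative p).continuous.intervalIntegrable _ _)
    (derivative (derivative q)).continuousOn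
  convert h using 1
  · refine intervalIntegral.integral_congr fun x _ ↦ ?_
    simp only [gegenbauerOperator_apply, map_add, map_mul, map_one, eval_sub, eval_mul, eval_one,
      eval_pow, eval_X, eval_add, eval_C]
    ring
  · congr 1
    refine intervalIntegral.integral_congr fun x _ ↦ ?_
    ring_nf

/-- The squared norm of `C^λ_n` with respect to `gegenbauerInner`, as a closed formula in `λ`
and `n`. -/
noncomputable def gegenbauerNormSq (lam : ℝ) (n : ℕ) : ℝ :=
  Real.pi * (2 : ℝ) ^ (1 - 2 * lam) * Real.Gamma (n + 2 * lam) /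
    (n.factorial * (n + lam) * Real.Gamma lam ^ 2)

theorem gegenbauerNormSq_succ {lam : ℝ} (hlam : -1 / 2 < lam) (h₀ : lam ≠ 0) (n : ℕ) :
    ((n + 1) * (n + 1 + 2 * lam)) * gegenbauerNormSq lam (n + 1) =
      (2 * lam) ^ 2 * gegenbauerNormSq (lam + 1) n := by
  have : (0 : ℝ) ≤ n := n.cast_nonneg
  have hpow : (2 : ℝ) ^ (1 - 2 * lam) = 2 ^ 2 * 2 ^ (1 - 2 * (lam + 1)) := by
    rw [← Real.rpow_natCast, ← Real.rpow_add zero_lt_two]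
    push_cast
    ring_nf
  have hGamma : Real.Gamma (n + 2 * (lam + 1)) =
      (n + 1 + 2 * lam) * Real.Gamma (n + 1 + 2 * lam) := by
    rw [← Real.Gamma_add_one (by linarith)]
    ring_nf
  rw [gegenbauerNormSq, gegenbauerNormSq, hpow, hGamma, Real.Gamma_add_one h₀, Nat.factorial_succ]
  push_cast
  field_simp
  ring

theorem Gamma_ne_zero_of_neg_one_lt {lam : ℝ} (hlam : -1 < lam) (h₀ : lam ≠ 0) :
    Real.Gamma lam ≠ 0 := by
  have hpos : 0 < lam * Real.Gamma lam := by
    rw [← Real.Gamma_add_one h₀]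
    exact Real.Gamma_pos_of_pos (by linarith)
  exact right_ne_zero_of_mul hpos.ne'

theorem gegenbauerNormSq_zero {lam : ℝ} (hlam : -1 < lam) (h₀ : lam ≠ 0) :
    gegenbauerNormSq lam 0 = √Real.pi * Real.Gamma (lam + 1 / 2) / Real.Gamma (lam + 1) := by
  have hGamma := Gamma_ne_zero_of_neg_one_lt hlam h₀
  have hdup : Real.pi * 2 ^ (1 - 2 * lam) * Real.Gamma (2 * lam) =
      √Real.pi * (Real.Gamma lam * Real.Gamma (lam + 1 / 2)) := by
    rw [Real.Gamma_mul_Gamma_add_half]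
    linear_combination
      -(2 ^ (1 - 2 * lam) * Real.Gamma (2 * lam)) * Real.mul_self_sqrt Real.pi_pos.le
  simp only [gegenbauerNormSq, Nat.cast_zero, zero_add, Nat.factorial_zero, Nat.cast_one, one_mul]
  rw [hdup, Real.Gamma_add_one h₀]
  field_simp

theorem mul_gegenbauerInner_gegenbauerPoly {lam : ℝ} (hlam : -1 / 2 < lam) (p : ℝ[X]) (n : ℕ) :
    (n * (n + 2 * lam)) * gegenbauerInner lam p (gegenbauerPoly lam n) =
      gegenbauerInner (lam + 1) (derivative p) (derivative (gegenbauerPoly lam n)) := by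
  rw [← neg_inj, ← gegenbauerInner_operator_right hlam,
    gegenbauerOperator_gegenbauerPoly (by linarith), ← neg_smul, gegenbauerInner_smul_right,
    neg_mul]

theorem succ_mul_add_two_mul_ne_zero {lam : ℝ} (hlam : -1 / 2 < lam) (n : ℕ) :
    ((n : ℝ) + 1) * (n + 1 + 2 * lam) ≠ 0 := by
  have : (0 : ℝ) ≤ n := n.cast_nonneg
  exact mul_ne_zero (by linarith) (by linarith)

theorem gegenbauerInner_gegenbauerPoly_zero_succ {lam : ℝ} (hlam : -1 / 2 < lam) (n : ℕ) :
    gegenbauerInner lam (gegenbauerPoly lam 0) (gegenbauerPoly lam (n + 1)) = 0 := by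
  have h := mul_gegenbauerInner_gegenbauerPoly hlam (gegenbauerPoly lam 0) (n + 1)
  rw [derivative_gegenbauerPoly_zero, gegenbauerInner_zero_left] at h
  push_cast at h
  exact (mul_eq_zero.1 h).resolve_left (succ_mul_add_two_mul_ne_zero hlam n)

theorem gegenbauerInner_gegenbauerPoly_succ_succ {lam : ℝ} (hlam : -1 / 2 < lam) (h₀ : lam ≠ 0)
    (m n : ℕ) :
    ((n + 1) * (n + 1 + 2 * lam)) *
        gegenbauerInner lam (gegenbauerPoly lam (m + 1)) (gegenbauerPoly lam (n + 1)) =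
      (2 * lam) ^ 2 *
        gegenbauerInner (lam + 1) (gegenbauerPoly (lam + 1) m) (gegenbauerPoly (lam + 1) n) := by
  have h := mul_gegenbauerInner_gegenbauerPoly hlam (gegenbauerPoly lam (m + 1)) (n + 1)
  rw [derivative_gegenbauerPoly_succ h₀, derivative_gegenbauerPoly_succ h₀,
    gegenbauerInner_smul_left, gegenbauerInner_smul_right] at h
  push_cast at h
  rw [h]
  ring

theorem gegenbauerInner_gegenbauerPoly_zero_zero {lam : ℝ} (hlam : -1 / 2 < lam)
    (h₀ : lam ≠ 0) :
    gegenbauerInner lam (gegenbauerPoly lam 0) (gegenbauerPoly lam 0) = gegenbauerNormSq lam 0 := by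
  have hs : -1 < lam - 1 / 2 := by linarith
  have hlam' : -1 < lam := by linarith
  rw [gegenbauerNormSq_zero hlam' h₀, gegenbauerPoly_zero (Gamma_ne_zero_of_neg_one_lt hlam' h₀)]
  simp only [gegenbauerInner, eval_one, one_mul]
  rw [integral_one_sub_sq_rpow hs]
  ring_nf

theorem gegenbauerInner_gegenbauerPoly {lam : ℝ} (hlam : -1 / 2 < lam) (h₀ : lam ≠ 0) (m n : ℕ) :
    gegenbauerInner lam (gegenbauerPoly lam m) (gegenbauerPoly lam n) =
      if m = n then gegenbauerNormSq lam n else 0 := by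
  induction m generalizing lam n with
  | zero =>
    rcases n with _ | n
    · rw [gegenbauerInner_gegenbauerPoly_zero_zero hlam h₀, if_pos rfl]
    · rw [gegenbauerInner_gegenbauerPoly_zero_succ hlam, if_neg n.succ_ne_zero.symm]
  | succ m ih =>
    rcases n with _ | n
    · rw [gegenbauerInner_comm, gegenbauerInner_gegenbauerPoly_zero_succ hlam,
        if_neg m.succ_ne_zero]
    · apply mul_left_cancel₀ (succ_mul_add_two_mul_ne_zero hlam n)
      rw [gegenbauerInner_gegenbauerPoly_succ_succ hlam h₀, ih (by linarith) (by linarith)]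
      simp only [add_left_inj, mul_ite, mul_zero, gegenbauerNormSq_succ hlam h₀]

theorem stmt7_general {lam : ℝ} (hlam : -1 / 2 < lam) (h₀ : lam ≠ 0) (m n : ℕ) :
    ∫ x in (-1 : ℝ)..1,
        gegenbauer lam m x * gegenbauer lam n x * (1 - x ^ 2) ^ (lam - 1 / 2) =
      if m = n then
        Real.pi * (2 : ℝ) ^ (1 - 2 * lam) * Real.Gamma ((n : ℝ) + 2 * lam) /
          (n.factorial * ((n : ℝ) + lam) * Real.Gamma lam ^ 2)
      else 0 := by
  simpa only [gegenbauerInner, gegenbauerNormSq, eval_gegenbauerPoly] using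
    gegenbauerInner_gegenbauerPoly hlam h₀ m n

theorem stmt7 (lam : ℝ) (hlam : 0 < lam) (m n : ℕ) :
    ∫ x in (-1 : ℝ)..1,
        gegenbauer lam m x * gegenbauer lam n x * (1 - x ^ 2) ^ (lam - 1 / 2) =
      if m = n then
        Real.pi * (2 : ℝ) ^ (1 - 2 * lam) * Real.Gamma ((n : ℝ) + 2 * lam) /
          (n.factorial * ((n : ℝ) + lam) * Real.Gamma lam ^ 2)
      else 0 :=
  stmt7_general (by linarith) hlam.ne' m n
end
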